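/- Let α, β > 0, R_a, R_b ∈ ℝ³, c = α + β, ρ = αβ/c, R² = |R_a - R_b|². Then for every natural number m, ∫_{ℝ³} exp(-α|r - R_a|²) |r - R_a|^{2m} exp(-β|r - R_b|²) dr = (π^{3/2} exp(-ρR²) / (2^m c^{m+3/2})) * ∑_{j=0}^{m} 2^j * ((2m+1)!! / (2j+1)!!) * C(m, j) * (β^{2j}/c^j) * R^{2j}. -/

import Mathlib

open Real Nat Finset MeasureTheory

/-!
Against the measure with density `exp (-β ‖r - b‖²)`, the moments of `X r = -‖r - a‖²` weighted by
`exp (α X)` are the derivatives in `α` of the moment generating function of `X`. The latter is the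
plain two-center integral: completing the square evaluates it as a constant times
`c ^ (-d / 2) * exp (s / c)`, where `c = α + β`, `s = β² ‖a - b‖²` and `d` is the dimension. By a
Rodrigues formula the `m`-th derivative of `c ^ (-d / 2) * exp (s / c)` is this function times a
Laguerre polynomial in `s / c`; its coefficients are rising factorials of half-integers when `d` is
odd, hence quotients of odd double factorials.
-/

section Laguerre

open Polynomial

/-- The associated Laguerre polynomial `m! L_m^{(a - 1)}(-X)`, normalized to be monic. The sign of
the variable and the shift of the parameter make all its coefficients polynomials in `a` with
coefficients in `ℕ`, so that it exists over every commutative semiring. -/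
noncomputable def signlessLaguerre {R : Type*} [CommSemiring R] (a : R) (m : ℕ) : R[X] :=
  ∑ j ∈ range (m + 1), C (m.choose j * (ascPochhammer R (m - j)).eval (a + j)) * X ^ j

variable {R : Type*} [CommSemiring R]

theorem coeff_signlessLaguerre (a : R) (m j : ℕ) :
    (signlessLaguerre a m).coeff j = m.choose j * (ascPochhammer R (m - j)).eval (a + j) := by
  simp only [signlessLaguerre, finsetSum_coeff, coeff_C_mul_X_pow, Finset.sum_ite_eq,
    Finset.mem_range_succ_iff, ite_eq_left_iff, not_le]
  intro hmj
  simp [Nat.choose_eq_zero_of_lt hmj]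

theorem signlessLaguerre_zero (a : R) : signlessLaguerre a 0 = 1 := by
  simp [signlessLaguerre]

theorem ascPochhammer_eval_succ_left (n : ℕ) (a : R) :
    (ascPochhammer R (n + 1)).eval a = a * (ascPochhammer R n).eval (a + 1) := by
  simp [ascPochhammer_succ_left]

theorem eval_signlessLaguerre (a x : R) (m : ℕ) :
    (signlessLaguerre a m).eval x =
      ∑ j ∈ range (m + 1), m.choose j * (ascPochhammer R (m - j)).eval (a + j) * x ^ j := by
  simp [signlessLaguerre, eval_finsetSum]

theorem coeff_succ_succ_signlessLaguerre (a : R) (m j : ℕ) :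
    (signlessLaguerre a (m + 1)).coeff (j + 1) =
      (signlessLaguerre a m).coeff j +
        (a + m + (j + 1)) * (signlessLaguerre a m).coeff (j + 1) := by
  simp only [coeff_signlessLaguerre]
  obtain hj | rfl | hj := lt_trichotomy j m
  · obtain ⟨n, rfl⟩ := Nat.exists_eq_add_of_lt hj
    have absorb : ((j + n + 1).choose (j + 1) : R) * (j + 1) = (j + n + 1).choose j * (n + 1) := by
      rw [← Nat.cast_add_one j, ← Nat.cast_add_one n, ← Nat.cast_mul, ← Nat.cast_mul,
        Nat.choose_succ_right_eq, show j + n + 1 - j = n + 1 by lia]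
    rw [show j + n + 1 + 1 - (j + 1) = n + 1 by lia, show j + n + 1 - j = n + 1 by lia,
      show j + n + 1 - (j + 1) = n by lia, ascPochhammer_succ_eval, ascPochhammer_eval_succ_left,
      Nat.choose_succ_succ', add_assoc a (j : R) 1, ← Nat.cast_succ]
    generalize (ascPochhammer R n).eval (a + (j + 1 : ℕ)) = p
    push_cast
    calc
      _ = ((j + n + 1).choose j * (a + j) + (j + n + 1).choose (j + 1) * (a + j + n + 1)
            + (j + n + 1).choose j * (n + 1)) * p := by ring
      _ = _ := by rw [← absorb]; ring
  · simp
  · simp [Nat.choose_eq_zero_of_lt, hj, hj.trans (Nat.lt_succ_self j)]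

theorem signlessLaguerre_succ (a : R) (m : ℕ) :
    signlessLaguerre a (m + 1) =
      (X + C (a + m)) * signlessLaguerre a m + X * derivative (signlessLaguerre a m) := by
  ext (_ | j)
  · simp [coeff_signlessLaguerre, add_mul, ascPochhammer_succ_eval, mul_comm]
  · rw [coeff_succ_succ_signlessLaguerre, add_mul X, coeff_add, coeff_add, coeff_X_mul, coeff_C_mul,
      coeff_X_mul, coeff_derivative]
    ring

theorem doubleFactorial_div_doubleFactorial_odd {K : Type*} [Field K] [CharZero K] {j m : ℕ}
    (h : j ≤ m) :
    ((2 * m + 1)‼ / (2 * j + 1)‼ : K) =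
      2 ^ (m - j) * (ascPochhammer K (m - j)).eval (3 / 2 + j : K) := by
  induction m, h using Nat.le_induction with
  | base => simp [(Nat.doubleFactorial_pos _).ne']
  | succ m hjm ih =>
    rw [Nat.succ_sub hjm, pow_succ, ascPochhammer_succ_eval,
      show 2 * (m + 1) + 1 = 2 * m + 1 + 2 by ring, Nat.doubleFactorial_add_two, Nat.cast_mul,
      mul_div_assoc, ih]
    push_cast [Nat.cast_sub hjm]
    ring

theorem eval_signlessLaguerre_three_halves {K : Type*} [Field K] [CharZero K] (m : ℕ) (x : K) :
    (signlessLaguerre (3 / 2) m).eval x =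
      (∑ j ∈ range (m + 1), 2 ^ j * ((2 * m + 1)‼ / (2 * j + 1)‼) * m.choose j * x ^ j) /
        2 ^ m := by
  rw [eval_signlessLaguerre, Finset.sum_div]
  refine Finset.sum_congr rfl fun j hj ↦ ?_
  have hjm : j ≤ m := Finset.mem_range_succ_iff.1 hj
  rw [doubleFactorial_div_doubleFactorial_odd hjm, ← mul_assoc, pow_mul_pow_sub 2 hjm]
  field_simp

theorem hasDerivAt_rpow_neg_mul_exp_mul_signlessLaguerre (a s : ℝ) (m : ℕ) {c : ℝ} (hc : c ≠ 0) :
    HasDerivAt (fun c ↦ c ^ (-(a + m)) * exp (s / c) * (signlessLaguerre a m).eval (s / c))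
      (-(c ^ (-(a + (m + 1 : ℕ))) * exp (s / c) * (signlessLaguerre a (m + 1)).eval (s / c)))
      c := by
  have hdiv : HasDerivAt (fun c ↦ s / c) (-(s / c) / c) c :=
    ((hasDerivAt_inv hc).const_mul s).congr_deriv (by field_simp)
  have hpow : c ^ (-(a + (m + 1 : ℕ))) = c ^ (-(a + m)) / c := by
    rw [← Real.rpow_sub_one hc]
    push_cast
    ring_nf
  refine (((Real.hasDerivAt_rpow_const (Or.inl hc)).mul hdiv.exp).mul
    (((signlessLaguerre a m).hasDerivAt (s / c)).comp c hdiv)).congr_deriv ?_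
  rw [signlessLaguerre_succ, hpow, Real.rpow_sub_one hc]
  simp only [eval_add, eval_mul, eval_X, eval_C, Pi.mul_apply, Function.comp_apply]
  ring

theorem iteratedDeriv_rpow_neg_mul_exp_div (a s : ℝ) (m : ℕ) {c : ℝ} (hc : c ≠ 0) :
    iteratedDeriv m (fun c ↦ c ^ (-a) * exp (s / c)) c =
      (-1) ^ m * (c ^ (-(a + m)) * exp (s / c) * (signlessLaguerre a m).eval (s / c)) := by
  induction m generalizing c with
  | zero => simp [signlessLaguerre_zero]
  | succ m ih =>
    have ih_near := Filter.eventually_of_mem (isOpen_ne.mem_nhds hc) fun _ ↦ ih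
    rw [iteratedDeriv_succ, Filter.EventuallyEq.deriv_eq ih_near,
      ((hasDerivAt_rpow_neg_mul_exp_mul_signlessLaguerre a s m hc).const_mul _).deriv]
    ring

end Laguerre

section GaussianWeight

open ProbabilityTheory Module

variable {V : Type*} [NormedAddCommGroup V] [InnerProductSpace ℝ V]

theorem exp_mul_exp_neg_mul_sq_norm_sub {α β : ℝ} (h : α + β ≠ 0) (a b r : V) :
    exp (-α * ‖r - a‖ ^ 2) * exp (-β * ‖r - b‖ ^ 2) =
      exp (-(α * β / (α + β)) * ‖a - b‖ ^ 2) *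
        exp (-(α + β) * ‖r - (α + β)⁻¹ • (α • a + β • b)‖ ^ 2) := by
  have hcenter : r - (α + β)⁻¹ • (α • a + β • b) = (r - a) - (β / (α + β)) • (b - a) := by
    match_scalars <;> grind
  rw [← exp_add, ← exp_add, hcenter, ← sub_sub_sub_cancel_right r b a, norm_sub_rev a b]
  generalize r - a = u, b - a = w
  rw [norm_sub_sq_real, norm_sub_sq_real, norm_smul, inner_smul_right, mul_pow, Real.norm_eq_abs,
    sq_abs]
  congr 1
  field_simp
  ring

theorem exp_neg_mul_div_add_mul {α β : ℝ} (h : α + β ≠ 0) (x : ℝ) :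
    exp (-(α * β / (α + β)) * x) = exp (-β * x) * exp (β ^ 2 * x / (α + β)) := by
  rw [← exp_add]
  congr 1
  field_simp
  ring

variable [MeasurableSpace V] [BorelSpace V] [FiniteDimensional ℝ V]

theorem integral_exp_mul_exp_neg_mul_sq_norm_sub {α β : ℝ} (h : 0 < α + β) (a b : V) :
    ∫ r, exp (-α * ‖r - a‖ ^ 2) * exp (-β * ‖r - b‖ ^ 2) =
      exp (-(α * β / (α + β)) * ‖a - b‖ ^ 2) * (π / (α + β)) ^ (finrank ℝ V / 2 : ℝ) := by
  simp_rw [exp_mul_exp_neg_mul_sq_norm_sub h.ne' a b]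
  rw [integral_const_mul, integral_sub_right_eq_self (fun v : V ↦ exp (-(α + β) * ‖v‖ ^ 2)),
    GaussianFourier.integral_rexp_neg_mul_sq_norm h]

/-- The measure of density `exp (-β ‖r - b‖²)` with respect to the volume. It carries the second
Gaussian of a two-center integral, so that the first one can be read as an exponential weight. It
is not normalized, and infinite for `β ≤ 0` in positive dimension. -/
noncomputable def gaussianWeight (β : ℝ) (b : V) : Measure V :=
  volume.withDensity fun r ↦ ENNReal.ofReal (exp (-β * ‖r - b‖ ^ 2))

theorem integral_gaussianWeight (β : ℝ) (b : V) (f : V → ℝ) :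
    ∫ r, f r ∂gaussianWeight β b = ∫ r, f r * exp (-β * ‖r - b‖ ^ 2) := by
  rw [gaussianWeight, integral_withDensity_eq_integral_toReal_smul (by fun_prop) (by simp)]
  simp [ENNReal.toReal_ofReal (exp_nonneg _), mul_comm]

theorem mgf_neg_sq_norm_sub_gaussianWeight {α β : ℝ} (h : 0 < α + β) (a b : V) :
    mgf (fun r ↦ -‖r - a‖ ^ 2) (gaussianWeight β b) α =
      π ^ (finrank ℝ V / 2 : ℝ) * exp (-β * ‖a - b‖ ^ 2) *
        ((α + β) ^ (-(finrank ℝ V / 2 : ℝ)) * exp (β ^ 2 * ‖a - b‖ ^ 2 / (α + β))) := by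
  simp only [mgf, integral_gaussianWeight, mul_neg, ← neg_mul]
  rw [integral_exp_mul_exp_neg_mul_sq_norm_sub h, exp_neg_mul_div_add_mul h.ne',
    Real.div_rpow pi_pos.le h.le, Real.rpow_neg h.le]
  ring

theorem Ioi_subset_integrableExpSet_gaussianWeight (β : ℝ) (a b : V) :
    Set.Ioi (-β) ⊆ integrableExpSet (fun r ↦ -‖r - a‖ ^ 2) (gaussianWeight β b) := by
  intro α hα
  have h : 0 < α + β := neg_lt_iff_pos_add.1 hα
  -- A nonzero Bochner integral has an integrable integrand.
  refine Integrable.of_integral_ne_zero ?_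
  change mgf _ _ α ≠ 0
  rw [mgf_neg_sq_norm_sub_gaussianWeight h]
  positivity

theorem iteratedDeriv_mgf_neg_sq_norm_sub_gaussianWeight {α β : ℝ} (h : 0 < α + β) (a b : V)
    (m : ℕ) :
    iteratedDeriv m (mgf (fun r ↦ -‖r - a‖ ^ 2) (gaussianWeight β b)) α =
      (-1) ^ m * ∫ r, exp (-α * ‖r - a‖ ^ 2) * ‖r - a‖ ^ (2 * m) * exp (-β * ‖r - b‖ ^ 2) := by
  have hα : α ∈ interior (integrableExpSet (fun r ↦ -‖r - a‖ ^ 2) (gaussianWeight β b)) :=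
    interior_maximal (Ioi_subset_integrableExpSet_gaussianWeight β a b) isOpen_Ioi
      (neg_lt_iff_pos_add.2 h)
  rw [iteratedDeriv_mgf hα, integral_gaussianWeight, ← integral_const_mul]
  refine integral_congr_ae (.of_forall fun r ↦ ?_)
  simp only [neg_pow (‖r - a‖ ^ 2), ← pow_mul, mul_neg, neg_mul]
  ring

theorem two_center_gaussian_integral_general {α β : ℝ} (h : 0 < α + β) (a b : V) (m : ℕ) :
    ∫ r, exp (-α * ‖r - a‖ ^ 2) * ‖r - a‖ ^ (2 * m) * exp (-β * ‖r - b‖ ^ 2) =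
      π ^ (finrank ℝ V / 2 : ℝ) * exp (-(α * β / (α + β)) * ‖a - b‖ ^ 2) /
          (α + β) ^ (m + finrank ℝ V / 2 : ℝ) *
        (signlessLaguerre (finrank ℝ V / 2 : ℝ) m).eval (β ^ 2 * ‖a - b‖ ^ 2 / (α + β)) := by
  have hmgf : mgf (fun r ↦ -‖r - a‖ ^ 2) (gaussianWeight β b) =ᶠ[nhds α] fun x ↦
      π ^ (finrank ℝ V / 2 : ℝ) * exp (-β * ‖a - b‖ ^ 2) *
        ((x + β) ^ (-(finrank ℝ V / 2 : ℝ)) * exp (β ^ 2 * ‖a - b‖ ^ 2 / (x + β))) :=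
    Filter.eventually_of_mem (Ioi_mem_nhds (neg_lt_iff_pos_add.2 h)) fun _ hx ↦
      mgf_neg_sq_norm_sub_gaussianWeight (neg_lt_iff_pos_add.1 hx) a b
  have hderiv := iteratedDeriv_mgf_neg_sq_norm_sub_gaussianWeight h a b m
  rw [hmgf.iteratedDeriv_eq, iteratedDeriv_const_mul_field,
    congrFun (iteratedDeriv_comp_add_const m
      (fun c ↦ c ^ (-(finrank ℝ V / 2 : ℝ)) * exp (β ^ 2 * ‖a - b‖ ^ 2 / c)) β) α,
    iteratedDeriv_rpow_neg_mul_exp_div _ _ _ h.ne', mul_left_comm] at hderiv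
  rw [← mul_left_cancel₀ (pow_ne_zero m (neg_ne_zero.2 one_ne_zero)) hderiv,
    exp_neg_mul_div_add_mul h.ne', Real.rpow_neg h.le, add_comm (m : ℝ)]
  ring

end GaussianWeight

theorem two_center_gaussian_integral (α β : ℝ) (hα : 0 < α) (hβ : 0 < β)
    (Ra Rb : EuclideanSpace ℝ (Fin 3)) (m : ℕ) :
    ∫ r : EuclideanSpace ℝ (Fin 3),
        Real.exp (-α * ‖r - Ra‖ ^ 2) * ‖r - Ra‖ ^ (2 * m) * Real.exp (-β * ‖r - Rb‖ ^ 2)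
      = (π ^ ((3 : ℝ) / 2) * Real.exp (-(α * β / (α + β)) * ‖Ra - Rb‖ ^ 2) /
          ((2 : ℝ) ^ m * (α + β) ^ ((m : ℝ) + 3 / 2))) *
        ∑ j ∈ Finset.range (m + 1),
          (2 : ℝ) ^ j * (((2 * m + 1)‼ : ℝ) / ((2 * j + 1)‼ : ℝ)) * (m.choose j : ℝ) *
            (β ^ (2 * j) / (α + β) ^ j) * ‖Ra - Rb‖ ^ (2 * j) := by
  rw [two_center_gaussian_integral_general (add_pos hα hβ), finrank_euclideanSpace_fin,
    Nat.cast_ofNat, eval_signlessLaguerre_three_halves]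
  have hpow (j : ℕ) : (β ^ 2 * ‖Ra - Rb‖ ^ 2 / (α + β)) ^ j =
      β ^ (2 * j) / (α + β) ^ j * ‖Ra - Rb‖ ^ (2 * j) := by
    rw [mul_div_right_comm, mul_pow, div_pow, ← pow_mul, ← pow_mul]
  simp_rw [hpow, ← mul_assoc]
  ring
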